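/- arXiv:2105.09829 — 3 statements merged into one kernel-verified Lean document; each statement's English description precedes it below -/
import Mathlib

section
/- Let μ and ν be probability measures on a measurable space X, let σ = μ + ν, and let D* : X → ℝ be the Radon–Nikodym derivative dμ/dσ (note μ ≪ σ and ν ≪ σ). Let D : X → ℝ be any measurable function with 0 < D(x) < 1 for all x, and assume that log ∘ D is integrable with respect to μ, that log ∘ (1−D) is integrable with respect to ν, that log ∘ D* is integrable with respect to μ, and that log ∘ (1−D*) is integrable with respect to ν. Then ∫ log(D) dμ + ∫ log(1−D) dν ≤ ∫ log(D*) dμ + ∫ log(1−D*) dν. -/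
/-!
Write `p = dμ/dσ` and `q = dν/dσ` with `σ = μ + ν`, so that `p + q = 1` holds `σ`-almost everywhere.
Both sides of the inequality become integrals against `σ`, of `p log D + q log (1 - D)` and of
`p log p + q log q` respectively, and the integrands compare pointwise by Gibbs' inequality
`p log d + q log (1 - d) ≤ p log p + q log q`. The latter is the sum of two instances of
`mul_log_le_mul_log_add_sub`, whose error terms `d - p` and `(1 - d) - q` cancel.
-/

open MeasureTheory

/-- The inequality `log t ≤ t - 1` at `t = d / p`, multiplied by `p`. It includes `p = 0`, where both
products with a logarithm vanish. -/
lemma mul_log_le_mul_log_add_sub {p d : ℝ} (hp : 0 ≤ p) (hd : 0 < d) :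
    p * Real.log d ≤ p * Real.log p + (d - p) := by
  rcases hp.eq_or_lt with rfl | hp
  · simpa using hd.le
  · have h := Real.log_le_sub_one_of_pos (div_pos hd hp)
    rw [Real.log_div hd.ne' hp.ne'] at h
    have h2 := mul_le_mul_of_nonneg_left h hp.le
    have h3 : p * (d / p - 1) = d - p := by field_simp
    linarith

theorem optimal_discriminator
    {X : Type*} [MeasurableSpace X]
    (μ ν : Measure X) [IsProbabilityMeasure μ] [IsProbabilityMeasure ν]
    (σ : Measure X) (hσ : σ = μ + ν)
    (Dstar : X → ℝ) (hDstar : ∀ x, Dstar x = (μ.rnDeriv σ x).toReal)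
    (D : X → ℝ) (hD : Measurable D) (hD01 : ∀ x, 0 < D x ∧ D x < 1)
    (hI1 : Integrable (fun x => Real.log (D x)) μ)
    (hI2 : Integrable (fun x => Real.log (1 - D x)) ν)
    (hI3 : Integrable (fun x => Real.log (Dstar x)) μ)
    (hI4 : Integrable (fun x => Real.log (1 - Dstar x)) ν) :
    ∫ x, Real.log (D x) ∂μ + ∫ x, Real.log (1 - D x) ∂ν ≤
      ∫ x, Real.log (Dstar x) ∂μ + ∫ x, Real.log (1 - Dstar x) ∂ν := by
  have hμσ : μ ≪ σ := hσ ▸ Measure.AbsolutelyContinuous.rfl.add_right ν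
  have hνσ : ν ≪ σ := by
    rw [hσ, add_comm]; exact Measure.AbsolutelyContinuous.rfl.add_right μ
  have : IsFiniteMeasure σ := hσ ▸ inferInstance
  have hsum : ∀ᵐ x ∂σ, (ν.rnDeriv σ x).toReal = 1 - Dstar x := by
    have hself : (μ + ν).rnDeriv σ =ᵐ[σ] fun _ => 1 := by
      rw [← hσ]; exact σ.rnDeriv_self
    filter_upwards [Measure.rnDeriv_add' μ ν σ, hself, μ.rnDeriv_lt_top σ,
      ν.rnDeriv_lt_top σ] with x hadd hone hμx hνx
    rw [hadd, Pi.add_apply] at hone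
    have h := congrArg ENNReal.toReal hone
    rw [ENNReal.toReal_add hμx.ne hνx.ne, ENNReal.toReal_one] at h
    rw [hDstar]
    linarith
  rw [← integral_rnDeriv_smul hμσ (f := fun x => Real.log (D x)),
    ← integral_rnDeriv_smul hνσ (f := fun x => Real.log (1 - D x)),
    ← integral_rnDeriv_smul hμσ (f := fun x => Real.log (Dstar x)),
    ← integral_rnDeriv_smul hνσ (f := fun x => Real.log (1 - Dstar x))]
  rw [← integrable_rnDeriv_smul_iff hμσ] at hI1 hI3
  rw [← integrable_rnDeriv_smul_iff hνσ] at hI2 hI4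
  rw [← integral_add hI1 hI2, ← integral_add hI3 hI4]
  refine integral_mono_ae (hI1.add hI2) (hI3.add hI4) ?_
  filter_upwards [hsum] with x hx
  have hq : 0 ≤ 1 - Dstar x := hx ▸ ENNReal.toReal_nonneg
  have hp : 0 ≤ Dstar x := hDstar x ▸ ENNReal.toReal_nonneg
  have h1 := mul_log_le_mul_log_add_sub hp (hD01 x).1
  have h2 := mul_log_le_mul_log_add_sub hq (sub_pos.2 (hD01 x).2)
  simp only [Pi.add_apply, smul_eq_mul, hx, ← hDstar x]
  linarith
end

section
/- Let μ and ν be probability measures on a standard Borel measurable space X, let σ = μ + ν, let D* : X → ℝ be the Radon–Nikodym derivative dμ/dσ, and let m = (1/2) • (μ + ν) be the midpoint measure. Assume log ∘ D* is integrable with respect to μ and log ∘ (1−D*) is integrable with respect to ν. Then ∫ log(D*) dμ + ∫ log(1−D*) dν = −log 4 + KL(μ ‖ m) + KL(ν ‖ m), where KL denotes the Kullback–Leibler divergence. -/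
/-!
Halving the reference measure doubles a Radon–Nikodym derivative, so
`KL(ρ ‖ σ/2) = ∫ log (dρ/dσ) dρ + log 2` for every probability measure `ρ ≪ σ` whose
log-density is `ρ`-integrable (`klDiv_half_smul`). Applied to `μ` and
`ν` with `σ = μ + ν`, this produces the two integrals of the adversarial objective and the constant
`2 log 2 = log 4`, because `dν/dσ = 1 - dμ/dσ` holds `σ`-almost everywhere.
-/

open MeasureTheory

/-- The Kullback–Leibler divergence `KL(μ ‖ ν) = ∫ log (dμ/dν) dμ`. -/
noncomputable def klDiv {X : Type*} [MeasurableSpace X] (μ ν : Measure X) : ℝ :=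
  ∫ x, Real.log ((μ.rnDeriv ν x).toReal) ∂μ

theorem klDiv_half_smul {X : Type*} [MeasurableSpace X] (ρ σ : Measure X)
    [IsProbabilityMeasure ρ] [IsFiniteMeasure σ] (hρ : ρ ≪ σ)
    (hI : Integrable (fun x => Real.log (ρ.rnDeriv σ x).toReal) ρ) :
    klDiv ρ ((1/2 : ENNReal) • σ) = ∫ x, Real.log (ρ.rnDeriv σ x).toReal ∂ρ + Real.log 2 := by
  have h := llr_smul_right hρ (1/2 : ENNReal) (by simp) (by simp)
  have h2 : klDiv ρ ((1/2 : ENNReal) • σ)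
      = ∫ x, (Real.log (ρ.rnDeriv σ x).toReal + Real.log 2) ∂ρ := by
    refine integral_congr_ae ?_
    filter_upwards [h] with x hx
    simpa [llr] using hx
  rw [h2, integral_add hI (integrable_const _)]
  simp

theorem toReal_rnDeriv_add_eq_one_sub {X : Type*} [MeasurableSpace X] (μ ν : Measure X)
    [IsFiniteMeasure μ] [IsFiniteMeasure ν] :
    ∀ᵐ x ∂(μ + ν), 1 - (μ.rnDeriv (μ + ν) x).toReal = (ν.rnDeriv (μ + ν) x).toReal := by
  filter_upwards [Measure.rnDeriv_add μ ν (μ + ν), Measure.rnDeriv_self (μ + ν),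
    Measure.rnDeriv_lt_top μ (μ + ν), Measure.rnDeriv_lt_top ν (μ + ν)] with x h1 h2 h3 h4
  rw [h2, Pi.add_apply] at h1
  have h5 := congrArg ENNReal.toReal h1
  rw [ENNReal.toReal_add h3.ne h4.ne, ENNReal.toReal_one] at h5
  linarith

theorem optimal_discriminator_value_eq_jensen_shannon
    {X : Type*} [MeasurableSpace X] [StandardBorelSpace X]
    (μ ν : Measure X) [IsProbabilityMeasure μ] [IsProbabilityMeasure ν]
    (σ : Measure X) (hσ : σ = μ + ν)
    (Dstar : X → ℝ) (hDstar : ∀ x, Dstar x = (μ.rnDeriv σ x).toReal)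
    (m : Measure X) (hm : m = (1/2 : ENNReal) • (μ + ν))
    (hI1 : Integrable (fun x => Real.log (Dstar x)) μ)
    (hI2 : Integrable (fun x => Real.log (1 - Dstar x)) ν) :
    ∫ x, Real.log (Dstar x) ∂μ + ∫ x, Real.log (1 - Dstar x) ∂ν =
      -Real.log 4 + klDiv μ m + klDiv ν m := by
  subst hσ hm
  obtain rfl : Dstar = fun x => (μ.rnDeriv (μ + ν) x).toReal := funext hDstar
  have hμ : μ ≪ μ + ν := Measure.AbsolutelyContinuous.rfl.add_right ν
  have hν : ν ≪ μ + ν := by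
    rw [add_comm]
    exact Measure.AbsolutelyContinuous.rfl.add_right μ
  have hlog : (fun x => Real.log (1 - (μ.rnDeriv (μ + ν) x).toReal)) =ᵐ[ν]
      fun x => Real.log (ν.rnDeriv (μ + ν) x).toReal := by
    filter_upwards [hν.ae_le (toReal_rnDeriv_add_eq_one_sub μ ν)] with x hx
    rw [hx]
  rw [klDiv_half_smul μ _ hμ hI1, klDiv_half_smul ν _ hν (hI2.congr hlog),
    integral_congr_ae hlog]
  have h4 : Real.log 4 = 2 * Real.log 2 := by
    rw [show (4 : ℝ) = 2 ^ 2 by norm_num, Real.log_pow]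
    norm_num
  rw [h4]
  ring
end

section
/- Let μ and ν be probability measures on a standard Borel measurable space X, let σ = μ + ν, let D* : X → ℝ be the Radon–Nikodym derivative dμ/dσ, and assume log ∘ D* is integrable with respect to μ and log ∘ (1−D*) is integrable with respect to ν. Then ∫ log(D*) dμ + ∫ log(1−D*) dν ≥ −log 4, with equality if and only if μ = ν. -/
/-!
Let `σ = μ + ν` and `D = dμ/dσ`, so that `dν/dσ = 1 - D` holds `σ`-almost everywhere. Changing
measure from `μ` and `ν` to `σ` turns the criterion into `-∫ H(D) dσ`, where `H` is the binary
entropy (`criterion_eq_neg_integral_binEntropy`). Since `H ≤ log 2`, with equality only at `1/2`,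
and `σ` has total mass `2`, the criterion is at least `-2 log 2 = -log 4`, with equality iff
`D = 1/2` holds `σ`-a.e. This last condition says that `dμ/dσ = dν/dσ` a.e., i.e. `μ = ν`
(`rnDeriv_eq_half_iff`).
-/

open MeasureTheory

section

variable {X : Type*} [MeasurableSpace X] (μ ν : Measure X) [IsFiniteMeasure μ] [IsFiniteMeasure ν]

lemma toReal_rnDeriv_add_right_eq_one_sub :
    ∀ᵐ x ∂(μ + ν), (ν.rnDeriv (μ + ν) x).toReal = 1 - (μ.rnDeriv (μ + ν) x).toReal := by
  filter_upwards [Measure.rnDeriv_add μ ν (μ + ν), Measure.rnDeriv_self (μ + ν),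
    Measure.rnDeriv_lt_top μ (μ + ν), Measure.rnDeriv_lt_top ν (μ + ν)] with x h1 h2 h3 h4
  rw [h2, Pi.add_apply] at h1
  have h := congrArg ENNReal.toReal h1
  rw [ENNReal.toReal_add h3.ne h4.ne, ENNReal.toReal_one] at h
  linarith

lemma absolutelyContinuous_add_left : μ ≪ μ + ν :=
  Measure.absolutelyContinuous_of_le (Measure.le_add_right le_rfl)

lemma absolutelyContinuous_add_right : ν ≪ μ + ν :=
  Measure.absolutelyContinuous_of_le (Measure.le_add_left le_rfl)

lemma rnDeriv_eq_half_iff :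
    (∀ᵐ x ∂(μ + ν), (μ.rnDeriv (μ + ν) x).toReal = 2⁻¹) ↔ μ = ν := by
  constructor
  · intro h
    have hae : μ.rnDeriv (μ + ν) =ᵐ[μ + ν] ν.rnDeriv (μ + ν) := by
      filter_upwards [h, toReal_rnDeriv_add_right_eq_one_sub μ ν,
        Measure.rnDeriv_lt_top μ (μ + ν), Measure.rnDeriv_lt_top ν (μ + ν)] with x h1 h2 h3 h4
      rw [← ENNReal.toReal_eq_toReal_iff' h3.ne h4.ne, h2, h1]
      norm_num
    rw [← Measure.withDensity_rnDeriv_eq μ (μ + ν) (absolutelyContinuous_add_left μ ν),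
      withDensity_congr_ae hae,
      Measure.withDensity_rnDeriv_eq ν (μ + ν) (absolutelyContinuous_add_right μ ν)]
  · rintro rfl
    filter_upwards [toReal_rnDeriv_add_right_eq_one_sub μ μ] with x hx
    linarith

/-- The change of measure from `μ` and `ν` to `μ + ν`: the two log-likelihood terms combine into
the negated binary entropy of the density. -/
lemma criterion_eq_neg_integral_binEntropy
    (hI1 : Integrable (fun x => Real.log (μ.rnDeriv (μ + ν) x).toReal) μ)
    (hI2 : Integrable (fun x => Real.log (1 - (μ.rnDeriv (μ + ν) x).toReal)) ν) :
    Integrable (fun x => Real.binEntropy (μ.rnDeriv (μ + ν) x).toReal) (μ + ν) ∧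
      ∫ x, Real.log (μ.rnDeriv (μ + ν) x).toReal ∂μ
        + ∫ x, Real.log (1 - (μ.rnDeriv (μ + ν) x).toReal) ∂ν
        = -∫ x, Real.binEntropy (μ.rnDeriv (μ + ν) x).toReal ∂(μ + ν) := by
  have hμ := absolutelyContinuous_add_left μ ν
  have hν := absolutelyContinuous_add_right μ ν
  have hJ1 := (integrable_toReal_rnDeriv_mul_iff hμ).mpr hI1
  have hJ2 := (integrable_toReal_rnDeriv_mul_iff hν).mpr hI2
  have hae : (fun x => -((μ.rnDeriv (μ + ν) x).toReal * Real.log (μ.rnDeriv (μ + ν) x).toReal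
        + (ν.rnDeriv (μ + ν) x).toReal * Real.log (1 - (μ.rnDeriv (μ + ν) x).toReal)))
      =ᵐ[μ + ν] fun x => Real.binEntropy (μ.rnDeriv (μ + ν) x).toReal := by
    filter_upwards [toReal_rnDeriv_add_right_eq_one_sub μ ν] with x hx
    rw [hx, Real.binEntropy, Real.log_inv, Real.log_inv]
    ring
  refine ⟨(hJ1.add hJ2).neg.congr hae, ?_⟩
  rw [← integral_congr_ae hae, integral_neg, neg_neg, integral_add hJ1 hJ2,
    integral_toReal_rnDeriv_mul hμ, integral_toReal_rnDeriv_mul hν]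

end

theorem optimal_discriminator_global_minimum
    {X : Type*} [MeasurableSpace X] [StandardBorelSpace X]
    (μ ν : Measure X) [IsProbabilityMeasure μ] [IsProbabilityMeasure ν]
    (σ : Measure X) (hσ : σ = μ + ν)
    (Dstar : X → ℝ) (hDstar : ∀ x, Dstar x = (μ.rnDeriv σ x).toReal)
    (hI1 : Integrable (fun x => Real.log (Dstar x)) μ)
    (hI2 : Integrable (fun x => Real.log (1 - Dstar x)) ν) :
    -Real.log 4 ≤ ∫ x, Real.log (Dstar x) ∂μ + ∫ x, Real.log (1 - Dstar x) ∂ν ∧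
      (∫ x, Real.log (Dstar x) ∂μ + ∫ x, Real.log (1 - Dstar x) ∂ν = -Real.log 4 ↔ μ = ν) := by
  subst hσ
  obtain rfl : Dstar = fun x => (μ.rnDeriv (μ + ν) x).toReal := funext hDstar
  obtain ⟨hint, heq⟩ := criterion_eq_neg_integral_binEntropy μ ν hI1 hI2
  have hlog : Real.log 4 = ∫ _, Real.log 2 ∂(μ + ν) := by
    rw [integral_const, show (4 : ℝ) = 2 ^ 2 by norm_num, Real.log_pow]
    simp [Measure.real, one_add_one_eq_two]
  have hgap : 0 ≤ fun x => Real.log 2 - Real.binEntropy (μ.rnDeriv (μ + ν) x).toReal :=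
    fun x => sub_nonneg.mpr Real.binEntropy_le_log_two
  have hgapint : Integrable
      (fun x => Real.log 2 - Real.binEntropy (μ.rnDeriv (μ + ν) x).toReal) (μ + ν) :=
    (integrable_const _).sub hint
  have hsub := integral_sub (integrable_const (μ := μ + ν) (Real.log 2)) hint
  have hnonneg := integral_nonneg (μ := μ + ν) hgap
  rw [← hlog] at hsub
  refine ⟨by rw [heq]; linarith, ?_⟩
  rw [← rnDeriv_eq_half_iff, heq]
  have hzero := integral_eq_zero_iff_of_nonneg hgap hgapint
  rw [hsub] at hzero
  rw [neg_inj, eq_comm, ← sub_eq_zero, hzero]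
  refine Filter.eventually_congr (Filter.Eventually.of_forall fun x => ?_)
  rw [Pi.zero_apply, sub_eq_zero, eq_comm, Real.binEntropy_eq_log_two]
end
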